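/- Let x,y ∈ SO(3) with ω(y⁻¹x) ∉ {0,π}, write ω = ω(y⁻¹x) and e_k = e_k(y⁻¹x), and for i,j ∈ {1,2,3} let X_j^x e_i denote the derivative at t = 0 of t ↦ e_i(y⁻¹·x·e^{tL_j}). Then for i,j,n pairwise distinct: X_j^x e_i = −e_i e_j·(1+cos ω)/(2 sin ω) + (ε_{jin}/2)·e_n, and for equal indices: X_i^x e_i = (1+cos ω)/(2 sin ω)·(1 − e_i²). -/

import Mathlib

noncomputable section

abbrev Mat3 := Matrix (Fin 3) (Fin 3) ℝ

/-- membership in SO(3) -/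
def IsSO3 (x : Mat3) : Prop := x.transpose * x = 1 ∧ x.det = 1

/-- rotation angle -/
def rotAngle (x : Mat3) : ℝ := Real.arccos ((Matrix.trace x - 1) / 2)

/-- generators of so(3) -/
def Lgen : Fin 3 → Mat3 :=
  ![!![0, 0, 0; 0, 0, -1; 0, 1, 0],
    !![0, 0, 1; 0, 0, 0; -1, 0, 0],
    !![0, -1, 0; 1, 0, 0; 0, 0, 0]]

/-- derivative in the first variable along generator `i` -/
def Xx (i : Fin 3) (f : Mat3 → Mat3 → ℝ) : Mat3 → Mat3 → ℝ :=
  fun x y => deriv (fun t : ℝ => f (x * NormedSpace.exp (t • Lgen i)) y) 0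

/-- derivative in the second variable along generator `i` -/
def Xy (i : Fin 3) (f : Mat3 → Mat3 → ℝ) : Mat3 → Mat3 → ℝ :=
  fun x y => deriv (fun t : ℝ => f x (y * NormedSpace.exp (t • Lgen i))) 0

/-- iterated integrals of the sign of the Chebyshev polynomial: the perfect B-spline chain -/
def fspline (s : ℕ) : ℕ → ℝ → ℝ
  | 0 => fun x => (-1 : ℝ) ^ (s - 1) * Real.sign ((Polynomial.Chebyshev.U ℝ ((s : ℤ) - 1)).eval x)
  | (k + 1) => fun x => ∫ t in (-1 : ℝ)..x, fspline s k t

/-- the scaled perfect B-spline g̃_{s-1} -/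
def gtilde (s : ℕ) (x : ℝ) : ℝ := fspline s (s - 1) (2 * x)

/-- discrete norm ‖g̃‖_{1,N} -/
def gnorm (s N : ℕ) : ℝ :=
  ∑ k ∈ Finset.Icc (-(N : ℤ)) (N : ℤ), gtilde s ((k : ℝ) / (2 * ((N : ℝ) + 1)))

/-- the trigonometric kernel σ̃_N (real-valued) -/
def sigmaT (s N : ℕ) (t : ℝ) : ℝ :=
  ((1 / (gnorm s N : ℂ)) *
      ∑ k ∈ Finset.Icc (-(N : ℤ)) (N : ℤ),
        (gtilde s ((k : ℝ) / (2 * ((N : ℝ) + 1))) : ℂ) * Complex.exp ((k : ℂ) * t * Complex.I)).re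

/-- the zonal kernel σ_N on SO(3) -/
def sigmaK (s N : ℕ) (x y : Mat3) : ℝ := sigmaT s N (rotAngle (y⁻¹ * x))

/-- rotation axis components -/
def axisComp : Fin 3 → Mat3 → ℝ :=
  ![fun x => (x 2 1 - x 1 2) / (2 * Real.sin (rotAngle x)),
    fun x => (x 0 2 - x 2 0) / (2 * Real.sin (rotAngle x)),
    fun x => (x 1 0 - x 0 1) / (2 * Real.sin (rotAngle x))]

/-- Levi-Civita symbol on `Fin 3` -/
def eps3 (a b c : Fin 3) : ℝ :=
  if (a, b, c) = (0, 1, 2) ∨ (a, b, c) = (1, 2, 0) ∨ (a, b, c) = (2, 0, 1) then 1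
  else if (a, b, c) = (2, 1, 0) ∨ (a, b, c) = (1, 0, 2) ∨ (a, b, c) = (0, 2, 1) then -1
  else 0

/-- constants c_{l,s} -/
def cConst : ℕ → ℕ → ℝ
  | 0, s => 1.02 * (Nat.factorial (s - 1)) * 2 ^ s * s
  | 1, s => 1.02 * (Nat.factorial (s - 1)) * 2 ^ s * (2 * s)
  | 2, s => 1.02 * (Nat.factorial (s - 1)) * 2 ^ s * (4 * s + 1)
  | _, s => 1.02 * (Nat.factorial (s - 1)) * 2 ^ s * (9 * s - 2)

/-- ζ(m) for natural m -/
def zetaNat (m : ℕ) : ℝ := ∑' n : ℕ, (1 : ℝ) / ((n : ℝ) + 1) ^ m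

/-- constants C_{i,s} = 124 c_{i,s} ζ(s-2) -/
def CConst (i s : ℕ) : ℝ := 124 * cConst i s * zetaNat (s - 2)

end

open scoped Real

/-- derivative of an axis-component kernel in the first variable along generator `j` -/
noncomputable def XxAxis (j i : Fin 3) (x y : Mat3) : ℝ :=
  deriv (fun t : ℝ => axisComp i (y⁻¹ * (x * NormedSpace.exp (t • Lgen j)))) 0

/-- The axial vector of the skew-symmetric part of a matrix (without the factor `1/2`). -/
def axialVec (z : Mat3) : Fin 3 → ℝ :=
  ![z 2 1 - z 1 2, z 0 2 - z 2 0, z 1 0 - z 0 1]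

theorem axisComp_eq (i : Fin 3) (z : Mat3) :
    axisComp i z = axialVec z i / (2 * √(1 - ((z.trace - 1) / 2) ^ 2)) := by
  fin_cases i <;> simp [axisComp, axialVec, rotAngle, Real.sin_arccos]

theorem IsSO3.inv_mul {x y : Mat3} (hx : IsSO3 x) (hy : IsSO3 y) : IsSO3 (y⁻¹ * x) := by
  rw [Matrix.inv_eq_left_inv hy.1]
  refine ⟨?_, by simp [hx.2, hy.2]⟩
  rw [Matrix.transpose_mul, Matrix.transpose_transpose, Matrix.mul_assoc,
    ← Matrix.mul_assoc y, mul_eq_one_comm.mp hy.1, Matrix.one_mul, hx.1]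

theorem IsSO3.adjugate_eq {z : Mat3} (hz : IsSO3 z) : z.adjugate = z.transpose := by
  rw [← Matrix.inv_eq_left_inv hz.1, Matrix.inv_def, hz.2]
  simp

theorem trace_mul_Lgen (z : Mat3) (j : Fin 3) : (z * Lgen j).trace = -axialVec z j := by
  fin_cases j <;>
    simp [Lgen, axialVec, Matrix.trace, Matrix.mul_apply, Fin.sum_univ_three] <;> ring

theorem IsSO3.axialVec_mul_Lgen_self {z : Mat3} (hz : IsSO3 z) (i : Fin 3) :
    2 * (z.trace + 1) * axialVec (z * Lgen i) i = (z.trace + 1) ^ 2 - axialVec z i ^ 2 := by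
  have col (a b : Fin 3) := congrFun (congrFun hz.1 a) b
  have hz' : z * z.transpose = 1 := mul_eq_one_comm.mp hz.1
  have row (a b : Fin 3) := congrFun (congrFun hz' a) b
  have adj (a b : Fin 3) := congrFun (congrFun hz.adjugate_eq a) b
  have c0 := col 0 0
  have c1 := col 1 1
  have c2 := col 2 2
  have r0 := row 0 0
  have r1 := row 1 1
  have r2 := row 2 2
  have d0 := adj 0 0
  have d1 := adj 1 1
  have d2 := adj 2 2
  simp [Matrix.mul_apply, Fin.sum_univ_three, Matrix.adjugate_fin_three]
    at c0 c1 c2 r0 r1 r2 d0 d1 d2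
  fin_cases i <;>
    simp [Lgen, axialVec, Matrix.trace, Matrix.mul_apply, Fin.sum_univ_three]
  · linear_combination c1 + c2 - r0 + 2 * d0
  · linear_combination c0 + c2 - r1 + 2 * d1
  · linear_combination c0 + c1 - r2 + 2 * d2

theorem IsSO3.axialVec_mul_Lgen_of_ne {z : Mat3} (hz : IsSO3 z) {i j n : Fin 3}
    (hij : i ≠ j) (hjn : j ≠ n) (hin : i ≠ n) :
    2 * (z.trace + 1) * axialVec (z * Lgen j) i =
      (z.trace + 1) * (eps3 j i n * axialVec z n) - axialVec z i * axialVec z j := by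
  have col (a b : Fin 3) := congrFun (congrFun hz.1 a) b
  have hz' : z * z.transpose = 1 := mul_eq_one_comm.mp hz.1
  have row (a b : Fin 3) := congrFun (congrFun hz' a) b
  have adj (a b : Fin 3) := congrFun (congrFun hz.adjugate_eq a) b
  have c01 := col 0 1
  have c02 := col 0 2
  have c12 := col 1 2
  have r01 := row 0 1
  have r02 := row 0 2
  have r12 := row 1 2
  have d01 := adj 0 1
  have d02 := adj 0 2
  have d12 := adj 1 2
  have d10 := adj 1 0
  have d20 := adj 2 0
  have d21 := adj 2 1
  simp [Matrix.mul_apply, Fin.sum_univ_three, Matrix.adjugate_fin_three]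
    at c01 c02 c12 r01 r02 r12 d01 d02 d12 d10 d20 d21
  fin_cases i <;> fin_cases j <;> fin_cases n <;>
    first
    | exact absurd rfl hij
    | exact absurd rfl hjn
    | exact absurd rfl hin
    | (simp [Lgen, axialVec, eps3, Matrix.trace, Matrix.mul_apply, Fin.sum_univ_three]
       first
       | linear_combination -c01 - r01 + d01 + d10
       | linear_combination -c02 - r02 + d02 + d20
       | linear_combination -c12 - r12 + d12 + d21)

section

attribute [local instance] Matrix.linftyOpNormedRing Matrix.linftyOpNormedAlgebra

theorem hasDerivAt_mul_exp_smul_apply (z A : Mat3) (a b : Fin 3) :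
    HasDerivAt (fun t : ℝ => (z * NormedSpace.exp (t • A)) a b) ((z * A) a b) 0 := by
  have h := (hasDerivAt_exp_smul_const (𝕂 := ℝ) A (0 : ℝ)).const_mul z
  simp only [zero_smul, NormedSpace.exp_zero, one_mul] at h
  exact (LinearMap.toContinuousLinearMap
    (Matrix.entryLinearMap ℝ ℝ a b)).hasFDerivAt.comp_hasDerivAt (0 : ℝ) h

end

theorem hasDerivAt_axialVec_mul_exp (z A : Mat3) (i : Fin 3) :
    HasDerivAt (fun t : ℝ => axialVec (z * NormedSpace.exp (t • A)) i) (axialVec (z * A) i) 0 := by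
  have h := hasDerivAt_mul_exp_smul_apply z A
  fin_cases i
  · exact (h 2 1).sub (h 1 2)
  · exact (h 0 2).sub (h 2 0)
  · exact (h 1 0).sub (h 0 1)

theorem hasDerivAt_trace_mul_exp (z A : Mat3) :
    HasDerivAt (fun t : ℝ => (z * NormedSpace.exp (t • A)).trace) (z * A).trace 0 :=
  HasDerivAt.fun_sum fun a _ => hasDerivAt_mul_exp_smul_apply z A a a

theorem hasDerivAt_axisComp_mul_exp {z : Mat3} {c s : ℝ} (hc : (z.trace - 1) / 2 = c)
    (hs : √(1 - c ^ 2) = s) (hpos : 0 < s) (i j : Fin 3) :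
    HasDerivAt (fun t : ℝ => axisComp i (z * NormedSpace.exp (t • Lgen j)))
      (axialVec (z * Lgen j) i / (2 * s) - axialVec z i * axialVec z j * c / (4 * s ^ 3)) 0 := by
  simp only [axisComp_eq]
  have hne : 1 - c ^ 2 ≠ 0 := fun h => hpos.ne' (by rw [← hs, h, Real.sqrt_zero])
  have hz : z * NormedSpace.exp ((0 : ℝ) • Lgen j) = z := by simp
  have htr := (hasDerivAt_trace_mul_exp z (Lgen j)).sub_const 1 |>.div_const 2
  have hsqrt := ((htr.pow 2).const_sub 1).sqrt (by simpa [hz, hc] using hne)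
  have h := (hasDerivAt_axialVec_mul_exp z (Lgen j) i).div (hsqrt.const_mul 2)
    (by simpa [hz, hc, hs] using hpos.ne')
  refine h.congr_deriv ?_
  simp only [Pi.pow_apply, hz, hc, hs, trace_mul_Lgen]
  field_simp
  ring

theorem derivative_of_rotation_axis_components
    (x y : Mat3) (hx : IsSO3 x) (hy : IsSO3 y)
    (h0 : rotAngle (y⁻¹ * x) ≠ 0) (hpi : rotAngle (y⁻¹ * x) ≠ π) :
    (∀ i j n : Fin 3, i ≠ j → j ≠ n → i ≠ n →
      XxAxis j i x y
        = -(axisComp i (y⁻¹ * x) * axisComp j (y⁻¹ * x)) *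
            ((1 + Real.cos (rotAngle (y⁻¹ * x))) / (2 * Real.sin (rotAngle (y⁻¹ * x))))
          + (eps3 j i n / 2) * axisComp n (y⁻¹ * x)) ∧
    (∀ i : Fin 3,
      XxAxis i i x y
        = ((1 + Real.cos (rotAngle (y⁻¹ * x))) / (2 * Real.sin (rotAngle (y⁻¹ * x)))) *
            (1 - axisComp i (y⁻¹ * x) ^ 2)) := by
  have hz := hx.inv_mul hy
  simp only [XxAxis, ← Matrix.mul_assoc]
  generalize y⁻¹ * x = z at *
  obtain ⟨c, hc⟩ : ∃ c, (z.trace - 1) / 2 = c := ⟨_, rfl⟩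
  obtain ⟨s, hs⟩ : ∃ s, √(1 - c ^ 2) = s := ⟨_, rfl⟩
  have hc1 : c < 1 := by
    contrapose! h0
    rwa [rotAngle, hc, Real.arccos_eq_zero]
  have hc2 : -1 < c := by
    contrapose! hpi
    rwa [rotAngle, hc, Real.arccos_eq_pi]
  have hsq : 0 < 1 - c ^ 2 := by nlinarith
  have hpos : 0 < s := hs ▸ Real.sqrt_pos.mpr hsq
  have hs2 : s ^ 2 = 1 - c ^ 2 := by rw [← hs, Real.sq_sqrt hsq.le]
  have hcos : Real.cos (rotAngle z) = c := by
    rw [rotAngle, hc, Real.cos_arccos hc2.le hc1.le]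
  have hsin : Real.sin (rotAngle z) = s := by rw [rotAngle, hc, Real.sin_arccos, hs]
  have hT : z.trace + 1 = 2 * (1 + c) := by linarith
  have hc' : 1 + c ≠ 0 := by linarith
  have hderiv (i j : Fin 3) := (hasDerivAt_axisComp_mul_exp hc hs hpos i j).deriv
  simp only [hderiv, hcos, hsin]
  simp only [axisComp_eq, hc, hs]
  refine ⟨fun i j n hij hjn hin => ?_, fun i => ?_⟩
  · have key := hz.axialVec_mul_Lgen_of_ne hij hjn hin
    rw [hT] at key
    field_simp
    apply mul_left_cancel₀ hc'
    linear_combination 4 * s ^ 2 * key - 4 * axialVec z i * axialVec z j * hs2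
  · have key := hz.axialVec_mul_Lgen_self i
    rw [hT] at key
    field_simp
    apply mul_left_cancel₀ hc'
    linear_combination 4 * s ^ 2 * key - 4 * axialVec z i ^ 2 * hs2
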